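/- arXiv:1910.09012 — 2 statements merged into one kernel-verified Lean document; each statement's English description precedes it below -/
import Mathlib

section
/- There exists a linear form L in S_1 such that Q = L² if and only if D_i = 0 for every i = 1, …, 21. -/
noncomputable section

/-- The skew-commutation relation `z_j z_i = μ_{ij} z_i z_j` on the free algebra. -/
inductive SkewRel (k : Type*) [Field k] (μ : Fin 4 → Fin 4 → k) :
    FreeAlgebra k (Fin 4) → FreeAlgebra k (Fin 4) → Prop
  | rel (i j : Fin 4) :
      SkewRel k μ (FreeAlgebra.ι k j * FreeAlgebra.ι k i)
        (μ i j • (FreeAlgebra.ι k i * FreeAlgebra.ι k j))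

/-- The generators `z_1, …, z_4` of `S = k⟨z_1,…,z_4⟩/(z_j z_i - μ_{ij} z_i z_j)`. -/
def z (k : Type*) [Field k] (μ : Fin 4 → Fin 4 → k) (i : Fin 4) :
    RingQuot (SkewRel k μ) :=
  RingQuot.mkAlgHom k (SkewRel k μ) (FreeAlgebra.ι k i)

/-- Commutation in the quotient. -/
theorem z_comm (k : Type*) [Field k] (μ : Fin 4 → Fin 4 → k) (i j : Fin 4) :
    z k μ j * z k μ i = μ i j • (z k μ i * z k μ j) := by
  unfold z
  rw [← map_mul, ← map_mul, ← map_smul]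
  exact RingQuot.mkAlgHom_rel k (SkewRel.rel i j)

/-- Truncated point modules detect quadratic coefficients. -/
theorem exists_rep (k : Type*) [Field k] (μ : Fin 4 → Fin 4 → k) (p q : Fin 4 → k)
    (h : ∀ i j, q j * p i = μ i j * (q i * p j)) :
    ∃ f : RingQuot (SkewRel k μ) →ₗ[k] k, ∀ i j, f (z k μ i * z k μ j) = q i * p j := by
  let M : Fin 4 → Matrix (Fin 3) (Fin 3) k := fun i => !![0, 0, 0; p i, 0, 0; 0, q i, 0]
  have hM : ∀ i j, M i * M j = !![0, 0, 0; 0, 0, 0; q i * p j, 0, 0] := by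
    intro i j
    ext a b
    fin_cases a <;> fin_cases b <;> simp [M, Matrix.mul_apply, Fin.sum_univ_three]
  let φ : RingQuot (SkewRel k μ) →ₐ[k] Matrix (Fin 3) (Fin 3) k :=
    RingQuot.liftAlgHom k ⟨FreeAlgebra.lift k M, by
      rintro _ _ ⟨i, j⟩
      simp only [map_mul, map_smul, FreeAlgebra.lift_ι_apply, hM]
      rw [h i j]
      ext a b
      fin_cases a <;> fin_cases b <;> simp⟩
  have hφ : ∀ i, φ (z k μ i) = M i := by
    intro i
    simp [φ, z]
  refine ⟨(Matrix.entryLinearMap k k 2 0).comp φ.toLinearMap, fun i j => ?_⟩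
  simp [hφ, hM]

theorem exists_rep_pair (k : Type*) [Field k] (μ : Fin 4 → Fin 4 → k) (hμdiag : ∀ i, μ i i = 1)
    (hμ : ∀ i j, μ i j * μ j i = 1) (a b : Fin 4) (_hab : a ≠ b) (t : k) :
    ∃ f : RingQuot (SkewRel k μ) →ₗ[k] k, ∀ i j, f (z k μ i * z k μ j) =
      (if i = a then 1 else if i = b then μ a b * t else 0) *
      (if j = a then 1 else if j = b then t else 0) := by
  apply exists_rep k μ (fun j => if j = a then 1 else if j = b then t else 0)
    (fun i => if i = a then 1 else if i = b then μ a b * t else 0)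
  intro i j
  by_cases hi : i = a <;> by_cases hj : j = a <;> by_cases hi' : i = b <;> by_cases hj' : j = b <;>
    simp_all
  linear_combination (-t) * hμ a b

/-- Boolean universal quantifier over signs. -/
def allSign (p : SignType → Bool) : Bool :=
  p SignType.zero && (p SignType.pos && p SignType.neg)

/-- Boolean existential quantifier over nonzero signs. -/
def anySign (p : SignType → Bool) : Bool := p SignType.pos || p SignType.neg

/-- Boolean test for the sign `-1`. -/
def isNegSign : SignType → Bool
  | SignType.neg => true
  | _ => false

/-- Multiplication of signs by pattern matching. -/
def mulSign : SignType → SignType → SignType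
  | SignType.zero, _ => SignType.zero
  | SignType.pos, t => t
  | SignType.neg, SignType.zero => SignType.zero
  | SignType.neg, SignType.pos => SignType.neg
  | SignType.neg, SignType.neg => SignType.pos

theorem mulSign_eq : ∀ s t : SignType, mulSign s t = s * t := by decide

/-- Boolean test for compatibility of an edge sign with two vertex signs. -/
def goodSign (s e f : SignType) : Bool := !isNegSign (mulSign s (mulSign e f))

theorem allSign_iff (p : SignType → Bool) : allSign p = true ↔ ∀ s, p s = true := by
  simp only [allSign, Bool.and_eq_true]
  refine ⟨fun h s => ?_, fun h => ⟨h _, h _, h _⟩⟩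
  cases s
  exacts [h.1, h.2.2, h.2.1]

theorem anySign_iff (p : SignType → Bool) : anySign p = true ↔ ∃ s, s ≠ 0 ∧ p s = true := by
  simp only [anySign, Bool.or_eq_true]
  constructor
  · rintro (h | h)
    exacts [⟨_, by decide, h⟩, ⟨_, by decide, h⟩]
  · rintro ⟨s, hs, h⟩
    cases s
    exacts [absurd rfl hs, Or.inr h, Or.inl h]

theorem isNegSign_iff : ∀ s : SignType, isNegSign s = true ↔ s = -1 := by decide

theorem goodSign_imp : ∀ s e f : SignType, e ≠ 0 → f ≠ 0 → goodSign s e f = true →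
    s = 0 ∨ s = e * f := by decide

theorem sign_check : (allSign fun s12 => allSign fun s13 => allSign fun s23 =>
    isNegSign (mulSign (mulSign s12 s13) s23) || allSign fun s14 => allSign fun s24 =>
    (isNegSign (mulSign (mulSign s12 s14) s24) || (isNegSign (mulSign (mulSign s13 s24) (mulSign s14 s23)) ||
    allSign fun s34 => (isNegSign (mulSign (mulSign s13 s14) s34) || (isNegSign (mulSign (mulSign s23 s24) s34) ||
    (isNegSign (mulSign (mulSign s12 s34) (mulSign s13 s24)) || (isNegSign (mulSign (mulSign s14 s23) (mulSign s12 s34)) ||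
    anySign fun e1 => anySign fun e2 => goodSign s12 e1 e2 && anySign fun e3 =>
      (goodSign s13 e1 e3 && (goodSign s23 e2 e3 && anySign fun e4 =>
      (goodSign s14 e1 e4 && (goodSign s24 e2 e4 && goodSign s34 e3 e4))))))))))) = true := by
  exact Eq.refl true

/-- The sign combinatorics on the complete graph with four vertices. -/
theorem sign_solve : ∀ s12 s13 s14 s23 s24 s34 : SignType,
    s12 * s13 * s23 ≠ -1 → s12 * s14 * s24 ≠ -1 → s13 * s14 * s34 ≠ -1 → s23 * s24 * s34 ≠ -1 →
    s12 * s34 * (s13 * s24) ≠ -1 → s13 * s24 * (s14 * s23) ≠ -1 → s14 * s23 * (s12 * s34) ≠ -1 →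
    ∃ e1 e2 e3 e4 : SignType, (e1 ≠ 0 ∧ e2 ≠ 0 ∧ e3 ≠ 0 ∧ e4 ≠ 0) ∧
      (s12 = 0 ∨ s12 = e1 * e2) ∧ (s13 = 0 ∨ s13 = e1 * e3) ∧ (s14 = 0 ∨ s14 = e1 * e4) ∧
      (s23 = 0 ∨ s23 = e2 * e3) ∧ (s24 = 0 ∨ s24 = e2 * e4) ∧ (s34 = 0 ∨ s34 = e3 * e4) := by
  intro s12 s13 s14 s23 s24 s34 h1 h2 h3 h4 h5 h6 h7
  have h := sign_check
  simp only [allSign_iff, anySign_iff, Bool.or_eq_true, Bool.and_eq_true, isNegSign_iff,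
    mulSign_eq] at h
  rcases h s12 s13 s23 with h | h
  · exact absurd h h1
  rcases h s14 s24 with h | h | h
  · exact absurd h h2
  · exact absurd h h6
  rcases h s34 with h | h | h | h | h
  · exact absurd h h3
  · exact absurd h h4
  · exact absurd h h5
  · exact absurd h h7
  obtain ⟨e1, n1, e2, n2, g12, e3, n3, g13, g23, e4, n4, g14, g24, g34⟩ := h
  exact ⟨e1, e2, e3, e4, ⟨n1, n2, n3, n4⟩, goodSign_imp _ _ _ n1 n2 g12,
    goodSign_imp _ _ _ n1 n3 g13, goodSign_imp _ _ _ n1 n4 g14, goodSign_imp _ _ _ n2 n3 g23,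
    goodSign_imp _ _ _ n2 n4 g24, goodSign_imp _ _ _ n3 n4 g34⟩

theorem sign_sq (k : Type*) [Field k] (s : SignType) (h : s ≠ 0) : (s : k) ^ 2 = 1 := by
  cases s <;> simp_all

theorem pair_sign {k : Type*} [Field k] (x w : k) (h : x ^ 2 = w ^ 2) :
    ∃ s : SignType, x = (s : k) * w ∧ (s = 0 ↔ w = 0) := by
  by_cases hw : w = 0
  · exact ⟨0, by subst hw; simpa using h, by simp [hw]⟩
  · rcases sq_eq_sq_iff_eq_or_eq_neg.mp h with h | h
    · exact ⟨1, by simp [h], by simp [hw]⟩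
    · exact ⟨-1, by simp [h], by simp [hw]⟩

theorem sign_absurd {k : Type*} [Field k] (h2 : (2 : k) ≠ 0) (s t : SignType) (W : k) (hW : W ≠ 0)
    (hst : s * t = -1) (h : (s : k) * W = t * W) : False := by
  have h0 := mul_right_cancel₀ hW h
  have hts : (∃ _ : s = 1, t = -1) ∨ (∃ _ : s = -1, t = 1) := by
    clear h h0
    revert s t; decide
  rcases hts with ⟨rfl, rfl⟩ | ⟨rfl, rfl⟩ <;> simp at h0
  · exact h2 (by linear_combination h0)
  · exact h2 (by linear_combination -h0)

theorem tri {k : Type*} [Field k] (h2 : (2 : k) ≠ 0) (u v w c d e x y r : k) (s t q : SignType)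
    (hx : x = s * (u * c * d)) (hy : y = t * (v * c * e)) (hr : r = q * (w * d * e))
    (hs : s = 0 ↔ u * c * d = 0) (ht : t = 0 ↔ v * c * e = 0) (hq : q = 0 ↔ w * d * e = 0)
    (h : w * x * y = u * v * c ^ 2 * r) : s * t * q ≠ -1 := by
  intro hst
  have hs0 : s ≠ 0 := by rintro rfl; simp at hst
  have ht0 : t ≠ 0 := by rintro rfl; simp at hst
  have hq0 : q ≠ 0 := by rintro rfl; simp at hst
  have a1 := mt hs.mpr hs0
  have a2 := mt ht.mpr ht0
  have a3 := mt hq.mpr hq0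
  simp only [mul_eq_zero, not_or] at a1 a2 a3
  refine sign_absurd h2 (s * t) q (u * v * w * c ^ 2 * d * e) ?_ hst ?_
  · simp [a1, a2, a3]
  · subst hx hy hr
    push_cast
    linear_combination h

theorem quad {k : Type*} [Field k] (h2 : (2 : k) ≠ 0) (u v w m c d e f x y r n : k)
    (s t q p : SignType)
    (hx : x = s * (u * c * d)) (hy : y = t * (v * e * f))
    (hr : r = q * (w * c * e)) (hn : n = p * (m * d * f))
    (hs : s = 0 ↔ u * c * d = 0) (ht : t = 0 ↔ v * e * f = 0)
    (hq : q = 0 ↔ w * c * e = 0) (hp : p = 0 ↔ m * d * f = 0)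
    (h : w * m * x * y = u * v * r * n) : s * t * (q * p) ≠ -1 := by
  intro hst
  have hs0 : s ≠ 0 := by rintro rfl; simp at hst
  have ht0 : t ≠ 0 := by rintro rfl; simp at hst
  have hq0 : q ≠ 0 := by rintro rfl; simp at hst
  have hp0 : p ≠ 0 := by rintro rfl; simp at hst
  have a1 := mt hs.mpr hs0
  have a2 := mt ht.mpr ht0
  have a3 := mt hq.mpr hq0
  have a4 := mt hp.mpr hp0
  simp only [mul_eq_zero, not_or] at a1 a2 a3 a4
  refine sign_absurd h2 (s * t) (q * p) (u * v * w * m * c * d * e * f) ?_ hst ?_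
  · simp [a1, a2, a3, a4]
  · subst hx hy hr hn
    push_cast
    linear_combination h

theorem pair_final {k : Type*} [Field k] (u c d x : k) (s e f : SignType)
    (hx : x = s * (u * c * d)) (hs : s = 0 ↔ u * c * d = 0) (h : s = 0 ∨ s = e * f) :
    x = u * ((e : k) * c) * ((f : k) * d) := by
  rcases h with h | h
  · have h0 := hs.mp h
    rw [hx, h0]
    linear_combination (-(e : k) * f) * h0
  · rw [hx, h]
    push_cast
    ring

theorem L_sq (k : Type*) [Field k] (μ : Fin 4 → Fin 4 → k) (b1 b2 b3 b4 : k) :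
    (b1 • z k μ 0 + b2 • z k μ 1 + b3 • z k μ 2 + b4 • z k μ 3) ^ 2 =
      (b1 ^ 2) • (z k μ 0 * z k μ 0) + (b2 ^ 2) • (z k μ 1 * z k μ 1) +
      (b3 ^ 2) • (z k μ 2 * z k μ 2) + (b4 ^ 2) • (z k μ 3 * z k μ 3) +
      ((1 + μ 0 1) * b1 * b2) • (z k μ 0 * z k μ 1) +
      ((1 + μ 0 2) * b1 * b3) • (z k μ 0 * z k μ 2) +
      ((1 + μ 0 3) * b1 * b4) • (z k μ 0 * z k μ 3) +
      ((1 + μ 1 2) * b2 * b3) • (z k μ 1 * z k μ 2) +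
      ((1 + μ 1 3) * b2 * b4) • (z k μ 1 * z k μ 3) +
      ((1 + μ 2 3) * b3 * b4) • (z k μ 2 * z k μ 3) := by
  simp only [sq, add_mul, mul_add, smul_mul_smul_comm, z_comm k μ 0 1, z_comm k μ 0 2,
    z_comm k μ 0 3, z_comm k μ 1 2, z_comm k μ 1 3, z_comm k μ 2 3]
  module

theorem stmt0 (k : Type*) [Field k] [IsAlgClosed k] (h2 : (2 : k) ≠ 0)
    (μ : Fin 4 → Fin 4 → k) (hμdiag : ∀ i, μ i i = 1)
    (hμ : ∀ i j, μ i j * μ j i = 1)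
    (a11 a22 a33 a44 a12 a13 a14 a23 a24 a34 : k) :
    (∃ L ∈ (Submodule.span k ({z k μ 0, z k μ 1, z k μ 2, z k μ 3} : Set (RingQuot (SkewRel k μ)))),
        (a11 • (z k μ 0 * z k μ 0) + a22 • (z k μ 1 * z k μ 1) +
      a33 • (z k μ 2 * z k μ 2) + a44 • (z k μ 3 * z k μ 3) +
      (2 * a12) • (z k μ 0 * z k μ 1) + (2 * a13) • (z k μ 0 * z k μ 2) +
      (2 * a14) • (z k μ 0 * z k μ 3) + (2 * a23) • (z k μ 1 * z k μ 2) +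
      (2 * a24) • (z k μ 1 * z k μ 3) + (2 * a34) • (z k μ 2 * z k μ 3)) = L ^ 2) ↔
      (4 * a12 ^ 2 - (1 + μ 0 1) ^ 2 * a11 * a22 = 0 ∧
      4 * a13 ^ 2 - (1 + μ 0 2) ^ 2 * a11 * a33 = 0 ∧
      4 * a14 ^ 2 - (1 + μ 0 3) ^ 2 * a11 * a44 = 0 ∧
      4 * a23 ^ 2 - (1 + μ 1 2) ^ 2 * a22 * a33 = 0 ∧
      4 * a24 ^ 2 - (1 + μ 1 3) ^ 2 * a22 * a44 = 0 ∧
      4 * a34 ^ 2 - (1 + μ 2 3) ^ 2 * a33 * a44 = 0 ∧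
      2 * (1 + μ 1 2) * a12 * a13 - (1 + μ 0 1) * (1 + μ 0 2) * a11 * a23 = 0 ∧
      2 * (1 + μ 1 3) * a12 * a14 - (1 + μ 0 1) * (1 + μ 0 3) * a11 * a24 = 0 ∧
      2 * (1 + μ 0 2) * a12 * a23 - (1 + μ 0 1) * (1 + μ 1 2) * a13 * a22 = 0 ∧
      2 * (1 + μ 0 3) * a12 * a24 - (1 + μ 0 1) * (1 + μ 1 3) * a14 * a22 = 0 ∧
      2 * (1 + μ 2 3) * a13 * a14 - (1 + μ 0 2) * (1 + μ 0 3) * a11 * a34 = 0 ∧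
      2 * (1 + μ 0 1) * a13 * a23 - (1 + μ 0 2) * (1 + μ 1 2) * a33 * a12 = 0 ∧
      2 * (1 + μ 0 3) * a13 * a34 - (1 + μ 0 2) * (1 + μ 2 3) * a33 * a14 = 0 ∧
      2 * (1 + μ 0 1) * a14 * a24 - (1 + μ 0 3) * (1 + μ 1 3) * a12 * a44 = 0 ∧
      2 * (1 + μ 0 2) * a14 * a34 - (1 + μ 0 3) * (1 + μ 2 3) * a13 * a44 = 0 ∧
      2 * (1 + μ 2 3) * a23 * a24 - (1 + μ 1 2) * (1 + μ 1 3) * a22 * a34 = 0 ∧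
      2 * (1 + μ 1 3) * a23 * a34 - (1 + μ 1 2) * (1 + μ 2 3) * a33 * a24 = 0 ∧
      2 * (1 + μ 1 2) * a24 * a34 - (1 + μ 1 3) * (1 + μ 2 3) * a23 * a44 = 0 ∧
      (1 + μ 0 2) * (1 + μ 1 3) * a12 * a34 - (1 + μ 0 1) * (1 + μ 2 3) * a13 * a24 = 0 ∧
      (1 + μ 0 3) * (1 + μ 1 2) * a13 * a24 - (1 + μ 0 2) * (1 + μ 1 3) * a14 * a23 = 0 ∧
      (1 + μ 0 1) * (1 + μ 2 3) * a14 * a23 - (1 + μ 0 3) * (1 + μ 1 2) * a12 * a34 = 0) := by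
  constructor
  · rintro ⟨L, hL, hQ⟩
    obtain ⟨b1, b2, b3, b4, rfl⟩ : ∃ b1 b2 b3 b4 : k,
        L = b1 • z k μ 0 + b2 • z k μ 1 + b3 • z k μ 2 + b4 • z k μ 3 := by
      simp only [Submodule.mem_span_insert, Submodule.mem_span_singleton] at hL
      obtain ⟨b1, _, ⟨b2, _, ⟨b3, _, ⟨b4, rfl⟩, rfl⟩, rfl⟩, rfl⟩ := hL
      exact ⟨b1, b2, b3, b4, by abel⟩
    rw [L_sq] at hQ
    have key := fun (a b : Fin 4) (hab : a ≠ b) (t : k) =>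
      exists_rep_pair k μ hμdiag hμ a b hab t
    have e1 : a11 = b1 ^ 2 := by
      obtain ⟨f, hf⟩ := key 0 1 (by decide) 0
      simpa [hf] using congrArg f hQ
    have e2 : a22 = b2 ^ 2 := by
      obtain ⟨f, hf⟩ := key 1 0 (by decide) 0
      simpa [hf] using congrArg f hQ
    have e3 : a33 = b3 ^ 2 := by
      obtain ⟨f, hf⟩ := key 2 0 (by decide) 0
      simpa [hf] using congrArg f hQ
    have e4 : a44 = b4 ^ 2 := by
      obtain ⟨f, hf⟩ := key 3 0 (by decide) 0
      simpa [hf] using congrArg f hQ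
    subst e1 e2 e3 e4
    have e12 : 2 * a12 = (1 + μ 0 1) * b1 * b2 := by
      obtain ⟨f, hf⟩ := key 0 1 (by decide) 1
      simpa [hf] using congrArg f hQ
    have e13 : 2 * a13 = (1 + μ 0 2) * b1 * b3 := by
      obtain ⟨f, hf⟩ := key 0 2 (by decide) 1
      simpa [hf] using congrArg f hQ
    have e14 : 2 * a14 = (1 + μ 0 3) * b1 * b4 := by
      obtain ⟨f, hf⟩ := key 0 3 (by decide) 1
      simpa [hf] using congrArg f hQ
    have e23 : 2 * a23 = (1 + μ 1 2) * b2 * b3 := by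
      obtain ⟨f, hf⟩ := key 1 2 (by decide) 1
      simpa [hf] using congrArg f hQ
    have e24 : 2 * a24 = (1 + μ 1 3) * b2 * b4 := by
      obtain ⟨f, hf⟩ := key 1 3 (by decide) 1
      simpa [hf] using congrArg f hQ
    have e34 : 2 * a34 = (1 + μ 2 3) * b3 * b4 := by
      obtain ⟨f, hf⟩ := key 2 3 (by decide) 1
      simpa [hf] using congrArg f hQ
    have half : ∀ x y : k, 2 * x = y → x = y / 2 := by
      intro x y h
      rw [← h]; field_simp
    have e12 := half _ _ e12
    have e13 := half _ _ e13
    have e14 := half _ _ e14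
    have e23 := half _ _ e23
    have e24 := half _ _ e24
    have e34 := half _ _ e34
    subst e12 e13 e14 e23 e24 e34
    refine ⟨?_, ?_, ?_, ?_, ?_, ?_, ?_, ?_, ?_, ?_, ?_, ?_, ?_, ?_, ?_, ?_, ?_, ?_, ?_, ?_, ?_⟩ <;>
      field_simp <;> ring
  · rintro ⟨D1, D2, D3, D4, D5, D6, D7, D8, D9, D10, D11, D12, D13, D14, D15, D16, D17, D18,
      D19, D20, D21⟩
    obtain ⟨c1, hc1⟩ := IsAlgClosed.exists_pow_nat_eq a11 (n := 2) (by norm_num)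
    obtain ⟨c2, hc2⟩ := IsAlgClosed.exists_pow_nat_eq a22 (n := 2) (by norm_num)
    obtain ⟨c3, hc3⟩ := IsAlgClosed.exists_pow_nat_eq a33 (n := 2) (by norm_num)
    obtain ⟨c4, hc4⟩ := IsAlgClosed.exists_pow_nat_eq a44 (n := 2) (by norm_num)
    subst hc1 hc2 hc3 hc4
    obtain ⟨s12, x12, i12⟩ := pair_sign (2 * a12) ((1 + μ 0 1) * c1 * c2)
      (by linear_combination D1)
    obtain ⟨s13, x13, i13⟩ := pair_sign (2 * a13) ((1 + μ 0 2) * c1 * c3)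
      (by linear_combination D2)
    obtain ⟨s14, x14, i14⟩ := pair_sign (2 * a14) ((1 + μ 0 3) * c1 * c4)
      (by linear_combination D3)
    obtain ⟨s23, x23, i23⟩ := pair_sign (2 * a23) ((1 + μ 1 2) * c2 * c3)
      (by linear_combination D4)
    obtain ⟨s24, x24, i24⟩ := pair_sign (2 * a24) ((1 + μ 1 3) * c2 * c4)
      (by linear_combination D5)
    obtain ⟨s34, x34, i34⟩ := pair_sign (2 * a34) ((1 + μ 2 3) * c3 * c4)
      (by linear_combination D6)
    have sw : ∀ {s : SignType} {u c d : k}, (s = 0 ↔ u * c * d = 0) → (s = 0 ↔ u * d * c = 0) := by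
      intro s u c d h
      rw [h, mul_right_comm]
    have sx : ∀ {s : SignType} {x u c d : k}, x = s * (u * c * d) → x = s * (u * d * c) := by
      intro s x u c d h
      rw [h, mul_right_comm]
    obtain ⟨e1, e2, e3, e4, ⟨n1, n2, n3, n4⟩, r12, r13, r14, r23, r24, r34⟩ :=
      sign_solve s12 s13 s14 s23 s24 s34
        (tri h2 _ _ _ _ _ _ _ _ _ _ _ _ x12 x13 x23 i12 i13 i23 (by linear_combination 2 * D7))
        (tri h2 _ _ _ _ _ _ _ _ _ _ _ _ x12 x14 x24 i12 i14 i24 (by linear_combination 2 * D8))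
        (tri h2 _ _ _ _ _ _ _ _ _ _ _ _ x13 x14 x34 i13 i14 i34 (by linear_combination 2 * D11))
        (tri h2 _ _ _ _ _ _ _ _ _ _ _ _ x23 x24 x34 i23 i24 i34 (by linear_combination 2 * D16))
        (quad h2 _ _ _ _ _ _ _ _ _ _ _ _ _ _ _ _ x12 x34 x13 x24 i12 i34 i13 i24
          (by linear_combination 4 * D19))
        (quad h2 _ _ _ _ _ _ _ _ _ _ _ _ _ _ _ _ x13 (sx x24) x14 (sx x23) i13 (sw i24) i14
          (sw i23) (by linear_combination 4 * D20))
        (quad h2 _ _ _ _ _ _ _ _ _ _ _ _ _ _ _ _ x14 x23 x12 (sx x34) i14 i23 i12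
          (sw i34) (by linear_combination 4 * D21))
    refine ⟨((e1 : k) * c1) • z k μ 0 + ((e2 : k) * c2) • z k μ 1 + ((e3 : k) * c3) • z k μ 2 +
      ((e4 : k) * c4) • z k μ 3, ?_, ?_⟩
    · refine add_mem (add_mem (add_mem ?_ ?_) ?_) ?_ <;>
        exact Submodule.smul_mem _ _ (Submodule.subset_span (by simp))
    · rw [L_sq, pair_final _ _ _ _ _ _ _ x12 i12 r12, pair_final _ _ _ _ _ _ _ x13 i13 r13,
        pair_final _ _ _ _ _ _ _ x14 i14 r14, pair_final _ _ _ _ _ _ _ x23 i23 r23,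
        pair_final _ _ _ _ _ _ _ x24 i24 r24, pair_final _ _ _ _ _ _ _ x34 i34 r34]
      simp only [mul_pow, sign_sq k _ n1, sign_sq k _ n2, sign_sq k _ n3, sign_sq k _ n4, one_mul]
end
end

section
/- If D_i = 0 for every i = 1, …, 21, then there exist scalars α_1, α_2, α_3, α_4 ∈ k such that Q = (α_1 z_1 + α_2 z_2 + α_3 z_3 + α_4 z_4)². -/
noncomputable section

set_option synthInstance.maxHeartbeats 400000 in
set_option synthInstance.maxSize 4096 in
set_option maxRecDepth 10000 in
/-- Switching lemma: a signed graph on four vertices with balanced cycles is switchable. -/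
theorem switching : ∀ e12 e13 e23 : SignType, e12 * e13 * e23 ≠ -1 →
    ∀ e14 e24 : SignType, e12 * e14 * e24 ≠ -1 →
    ∀ e34 : SignType, e13 * e14 * e34 ≠ -1 → e23 * e24 * e34 ≠ -1 →
    e12 * e34 * (e13 * e24) ≠ -1 → e13 * e24 * (e14 * e23) ≠ -1 →
    e14 * e23 * (e12 * e34) ≠ -1 →
    ∃ t1 : SignType, t1 ≠ 0 ∧ ∃ t2, t2 ≠ 0 ∧ (e12 = 0 ∨ e12 = t1 * t2) ∧
      ∃ t3, t3 ≠ 0 ∧ (e13 = 0 ∨ e13 = t1 * t3) ∧ (e23 = 0 ∨ e23 = t2 * t3) ∧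
      ∃ t4, t4 ≠ 0 ∧ (e14 = 0 ∨ e14 = t1 * t4) ∧ (e24 = 0 ∨ e24 = t2 * t4) ∧
      (e34 = 0 ∨ e34 = t3 * t4) := by
  decide +kernel

/-- The sign of an edge. -/
theorem edge {k : Type*} [Field k] (a c p q x y : k) (hx : p = x ^ 2) (hy : q = y ^ 2)
    (h : 4 * a ^ 2 - c ^ 2 * p * q = 0) :
    ∃ e : SignType, 2 * a = c * x * y * (e : k) ∧ (e = 0 ↔ c * x * y = 0) := by
  subst hx hy
  have h' : (2 * a - c * x * y) * (2 * a + c * x * y) = 0 := by linear_combination h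
  by_cases h0 : c * x * y = 0
  · refine ⟨0, ?_, by simp [h0]⟩
    rw [h0] at h' ⊢
    simpa using h'
  · rcases mul_eq_zero.1 h' with h1 | h1
    · exact ⟨1, by simpa using sub_eq_zero.1 h1, by simp [h0]⟩
    · exact ⟨-1, by simpa using eq_neg_of_add_eq_zero_left h1, by simp [h0]⟩

theorem sign_ne {k : Type*} [Field k] (h2 : (2 : k) ≠ 0) (u v : SignType)
    (h : (u : k) = (v : k)) : u * v ≠ -1 := by
  have h3 : (1 : k) ≠ -1 := fun h => h2 (by linear_combination h)
  have h4 : (-1 : k) ≠ 1 := fun h => h3 h.symm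
  revert h
  cases u <;> cases v <;> simp_all

theorem tri_s2 {k : Type*} [Field k] (h2 : (2 : k) ≠ 0) (a12 a13 a23 c12 c13 c23 p x y w : k)
    (e12 e13 e23 : SignType) (hp : p = x ^ 2)
    (h12 : 2 * a12 = c12 * x * y * (e12 : k) ∧ (e12 = 0 ↔ c12 * x * y = 0))
    (h13 : 2 * a13 = c13 * x * w * (e13 : k) ∧ (e13 = 0 ↔ c13 * x * w = 0))
    (h23 : 2 * a23 = c23 * y * w * (e23 : k) ∧ (e23 = 0 ↔ c23 * y * w = 0))
    (h : 2 * c23 * a12 * a13 - c12 * c13 * p * a23 = 0) : e12 * e13 * e23 ≠ -1 := by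
  by_cases z1 : e12 = 0
  · simp [z1]
  by_cases z2 : e13 = 0
  · simp [z2]
  by_cases z3 : e23 = 0
  · simp [z3]
  have n1 := fun h => z1 (h12.2.2 h)
  have n2 := fun h => z2 (h13.2.2 h)
  have n3 := fun h => z3 (h23.2.2 h)
  apply sign_ne h2
  have key : (c12 * x * y) * (c13 * x * w) * c23 * (((e12 * e13 : SignType) : k) - e23) = 0 := by
    rw [SignType.coe_mul]
    subst hp
    linear_combination 2 * h - c23 * 2 * a13 * h12.1 - c23 * (c12 * x * y * e12) * h13.1
      + c12 * c13 * x ^ 2 * h23.1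
  have n4 : c23 ≠ 0 := by rintro rfl; simp at n3
  exact sub_eq_zero.1 ((mul_eq_zero.1 key).resolve_left (mul_ne_zero (mul_ne_zero n1 n2) n4))

theorem quad_s2 {k : Type*} [Field k] (h2 : (2 : k) ≠ 0) (a b a' b' c d c' d' x y u v : k)
    (e f e' f' : SignType)
    (h1 : 2 * a = c * x * y * (e : k) ∧ (e = 0 ↔ c * x * y = 0))
    (h3 : 2 * b = d * u * v * (f : k) ∧ (f = 0 ↔ d * u * v = 0))
    (h4 : 2 * a' = c' * x * u * (e' : k) ∧ (e' = 0 ↔ c' * x * u = 0))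
    (h5 : 2 * b' = d' * y * v * (f' : k) ∧ (f' = 0 ↔ d' * y * v = 0))
    (h : c' * d' * a * b - c * d * a' * b' = 0) : e * f * (e' * f') ≠ -1 := by
  by_cases z1 : e = 0
  · simp [z1]
  by_cases z2 : f = 0
  · simp [z2]
  by_cases z3 : e' = 0
  · simp [z3]
  by_cases z4 : f' = 0
  · simp [z4]
  have n1 := fun h => z1 (h1.2.2 h)
  have n2 := fun h => z2 (h3.2.2 h)
  have n3 := fun h => z3 (h4.2.2 h)
  have n4 := fun h => z4 (h5.2.2 h)
  apply sign_ne h2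
  have key : (c * x * y) * (d * u * v) * (c' * d') *
      (((e * f : SignType) : k) - ((e' * f' : SignType) : k)) = 0 := by
    rw [SignType.coe_mul, SignType.coe_mul]
    linear_combination 4 * h - c' * d' * 2 * b * h1.1 - c' * d' * (c * x * y * e) * h3.1
      + c * d * 2 * b' * h4.1 + c * d * (c' * x * u * e') * h5.1
  have n5 : c' ≠ 0 := by rintro rfl; simp at n3
  have n6 : d' ≠ 0 := by rintro rfl; simp at n4
  exact sub_eq_zero.1 ((mul_eq_zero.1 key).resolve_left
    (mul_ne_zero (mul_ne_zero n1 n2) (mul_ne_zero n5 n6)))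

theorem edge_final {k : Type*} [Field k] (a c x y : k) (e t s : SignType)
    (h : 2 * a = c * x * y * (e : k) ∧ (e = 0 ↔ c * x * y = 0)) (he : e = 0 ∨ e = t * s) :
    2 * a = c * ((t * x) * (s * y)) := by
  rcases he with he | he
  · have h0 := h.2.1 he
    rw [h.1]
    linear_combination ((e : k) - t * s) * h0
  · rw [h.1, he, SignType.coe_mul]; ring

theorem diag_final {k : Type*} [Field k] (p x : k) (t : SignType) (ht : t ≠ 0) (h : p = x ^ 2) :
    p = (t * x) ^ 2 := by
  cases t <;> simp_all

theorem stmt2 (k : Type*) [Field k] [IsAlgClosed k] (h2 : (2 : k) ≠ 0)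
    (μ : Fin 4 → Fin 4 → k) (hμdiag : ∀ i, μ i i = 1)
    (hμ : ∀ i j, μ i j * μ j i = 1)
    (a11 a22 a33 a44 a12 a13 a14 a23 a24 a34 : k)
    (hD : 4 * a12 ^ 2 - (1 + μ 0 1) ^ 2 * a11 * a22 = 0 ∧
      4 * a13 ^ 2 - (1 + μ 0 2) ^ 2 * a11 * a33 = 0 ∧
      4 * a14 ^ 2 - (1 + μ 0 3) ^ 2 * a11 * a44 = 0 ∧
      4 * a23 ^ 2 - (1 + μ 1 2) ^ 2 * a22 * a33 = 0 ∧
      4 * a24 ^ 2 - (1 + μ 1 3) ^ 2 * a22 * a44 = 0 ∧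
      4 * a34 ^ 2 - (1 + μ 2 3) ^ 2 * a33 * a44 = 0 ∧
      2 * (1 + μ 1 2) * a12 * a13 - (1 + μ 0 1) * (1 + μ 0 2) * a11 * a23 = 0 ∧
      2 * (1 + μ 1 3) * a12 * a14 - (1 + μ 0 1) * (1 + μ 0 3) * a11 * a24 = 0 ∧
      2 * (1 + μ 0 2) * a12 * a23 - (1 + μ 0 1) * (1 + μ 1 2) * a13 * a22 = 0 ∧
      2 * (1 + μ 0 3) * a12 * a24 - (1 + μ 0 1) * (1 + μ 1 3) * a14 * a22 = 0 ∧
      2 * (1 + μ 2 3) * a13 * a14 - (1 + μ 0 2) * (1 + μ 0 3) * a11 * a34 = 0 ∧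
      2 * (1 + μ 0 1) * a13 * a23 - (1 + μ 0 2) * (1 + μ 1 2) * a33 * a12 = 0 ∧
      2 * (1 + μ 0 3) * a13 * a34 - (1 + μ 0 2) * (1 + μ 2 3) * a33 * a14 = 0 ∧
      2 * (1 + μ 0 1) * a14 * a24 - (1 + μ 0 3) * (1 + μ 1 3) * a12 * a44 = 0 ∧
      2 * (1 + μ 0 2) * a14 * a34 - (1 + μ 0 3) * (1 + μ 2 3) * a13 * a44 = 0 ∧
      2 * (1 + μ 2 3) * a23 * a24 - (1 + μ 1 2) * (1 + μ 1 3) * a22 * a34 = 0 ∧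
      2 * (1 + μ 1 3) * a23 * a34 - (1 + μ 1 2) * (1 + μ 2 3) * a33 * a24 = 0 ∧
      2 * (1 + μ 1 2) * a24 * a34 - (1 + μ 1 3) * (1 + μ 2 3) * a23 * a44 = 0 ∧
      (1 + μ 0 2) * (1 + μ 1 3) * a12 * a34 - (1 + μ 0 1) * (1 + μ 2 3) * a13 * a24 = 0 ∧
      (1 + μ 0 3) * (1 + μ 1 2) * a13 * a24 - (1 + μ 0 2) * (1 + μ 1 3) * a14 * a23 = 0 ∧
      (1 + μ 0 1) * (1 + μ 2 3) * a14 * a23 - (1 + μ 0 3) * (1 + μ 1 2) * a12 * a34 = 0) :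
    ∃ α1 α2 α3 α4 : k,
      (a11 • (z k μ 0 * z k μ 0) + a22 • (z k μ 1 * z k μ 1) +
      a33 • (z k μ 2 * z k μ 2) + a44 • (z k μ 3 * z k μ 3) +
      (2 * a12) • (z k μ 0 * z k μ 1) + (2 * a13) • (z k μ 0 * z k μ 2) +
      (2 * a14) • (z k μ 0 * z k μ 3) + (2 * a23) • (z k μ 1 * z k μ 2) +
      (2 * a24) • (z k μ 1 * z k μ 3) + (2 * a34) • (z k μ 2 * z k μ 3)) =
        (α1 • z k μ 0 + α2 • z k μ 1 + α3 • z k μ 2 + α4 • z k μ 3) ^ 2 := by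
  obtain ⟨d1, d2, d3, d4, d5, d6, d7, d8, -, -, d11, -, -, -, -, d16, -, -, d19, d20, d21⟩ := hD
  have sq : ∀ p : k, ∃ x, p = x ^ 2 := fun p =>
    (IsAlgClosed.exists_pow_nat_eq p (n := 2) (by norm_num)).imp fun _ h => h.symm
  obtain ⟨x1, hx1⟩ := sq a11
  obtain ⟨x2, hx2⟩ := sq a22
  obtain ⟨x3, hx3⟩ := sq a33
  obtain ⟨x4, hx4⟩ := sq a44
  obtain ⟨e12, h12⟩ := edge _ _ _ _ _ _ hx1 hx2 d1
  obtain ⟨e13, h13⟩ := edge _ _ _ _ _ _ hx1 hx3 d2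
  obtain ⟨e14, h14⟩ := edge _ _ _ _ _ _ hx1 hx4 d3
  obtain ⟨e23, h23⟩ := edge _ _ _ _ _ _ hx2 hx3 d4
  obtain ⟨e24, h24⟩ := edge _ _ _ _ _ _ hx2 hx4 d5
  obtain ⟨e34, h34⟩ := edge _ _ _ _ _ _ hx3 hx4 d6
  have sw : ∀ {a c x y : k} {e : SignType},
      (2 * a = c * x * y * (e : k) ∧ (e = 0 ↔ c * x * y = 0)) →
      (2 * a = c * y * x * (e : k) ∧ (e = 0 ↔ c * y * x = 0)) := by
    intro a c x y e h
    rwa [mul_right_comm c y x]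
  obtain ⟨t1, n1, t2, n2, f12, t3, n3, f13, f23, t4, n4, f14, f24, f34⟩ :=
    switching e12 e13 e23 (tri_s2 h2 _ _ _ _ _ _ _ _ _ _ _ _ _ hx1 h12 h13 h23 d7)
      e14 e24 (tri_s2 h2 _ _ _ _ _ _ _ _ _ _ _ _ _ hx1 h12 h14 h24 d8)
      e34 (tri_s2 h2 _ _ _ _ _ _ _ _ _ _ _ _ _ hx1 h13 h14 h34 d11)
      (tri_s2 h2 _ _ _ _ _ _ _ _ _ _ _ _ _ hx2 h23 h24 h34 d16)
      (quad_s2 h2 _ _ _ _ _ _ _ _ _ _ _ _ _ _ _ _ h12 h34 h13 h24 d19)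
      (quad_s2 h2 _ _ _ _ _ _ _ _ _ _ _ _ _ _ _ _ h13 (sw h24) h14 (sw h23)
        (by linear_combination d20))
      (quad_s2 h2 _ _ _ _ _ _ _ _ _ _ _ _ _ _ _ _ h14 h23 h12 (sw h34)
        (by linear_combination d21))
  refine ⟨t1 * x1, t2 * x2, t3 * x3, t4 * x4, ?_⟩
  rw [edge_final _ _ _ _ _ _ _ h12 f12, edge_final _ _ _ _ _ _ _ h13 f13,
    edge_final _ _ _ _ _ _ _ h14 f14, edge_final _ _ _ _ _ _ _ h23 f23,
    edge_final _ _ _ _ _ _ _ h24 f24, edge_final _ _ _ _ _ _ _ h34 f34,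
    diag_final _ _ _ n1 hx1, diag_final _ _ _ n2 hx2, diag_final _ _ _ n3 hx3,
    diag_final _ _ _ n4 hx4]
  generalize (t1 : k) * x1 = y1
  generalize (t2 : k) * x2 = y2
  generalize (t3 : k) * x3 = y3
  generalize (t4 : k) * x4 = y4
  simp only [pow_two, mul_add, add_mul, smul_mul_smul_comm]
  rw [z_comm k μ 0 1, z_comm k μ 0 2, z_comm k μ 0 3, z_comm k μ 1 2, z_comm k μ 1 3,
    z_comm k μ 2 3]
  module
end
end
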